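/- Let α ∈ (0,1), β ∈ (1+α, 2), and let W : (0,∞)² → ℝ be measurable with 0 ≤ W(x,y) ≤ (x/y)^α + (y/x)^α for all x,y > 0. There exists a constant C > 0 such that for all g, h ∈ X_{−α,β} the function B_W[g,h] defined by B_W[g,h](x) := (1/x²) ∫₀^x ∫_{x−y}^∞ y W(y,z) g(y) h(z) dz dy belongs to X_{1−α,β} and satisfies ‖B_W[g,h]‖_{X_{1−α,β}} ≤ C ‖g‖_{X_{−α,β}} ‖h‖_{X_{−α,β}}. -/

import Mathlib

open MeasureTheory Real Set Filter

noncomputable def weight (a b x : ℝ) : ℝ := if x ≤ 1 then x ^ a else x ^ b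

noncomputable def Xnorm (a b : ℝ) (g : ℝ → ℝ) : ℝ :=
  ∫ x in Ioi (0:ℝ), |g x| * weight a b x

def MemX (a b : ℝ) (g : ℝ → ℝ) : Prop :=
  IntegrableOn (fun x => g x * weight a b x) (Ioi 0)

noncomputable def Kern (ε : ℝ) (W : ℝ → ℝ → ℝ) (x y : ℝ) : ℝ := 2 + ε * W x y

def GoodW (α : ℝ) (W : ℝ → ℝ → ℝ) : Prop :=
  ContinuousOn (fun p : ℝ × ℝ => W p.1 p.2) (Ioi 0 ×ˢ Ioi 0) ∧
  (∀ x y : ℝ, 0 < x → 0 < y → W x y = W y x) ∧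
  (∀ l x y : ℝ, 0 < l → 0 < x → 0 < y → W (l * x) (l * y) = W x y) ∧
  (∀ x y : ℝ, 0 < x → 0 < y → 0 ≤ W x y ∧ W x y ≤ (x / y) ^ α + (y / x) ^ α)

def IsProfile (K : ℝ → ℝ → ℝ) (φ : ℝ → ℝ) : Prop :=
  LocallyIntegrableOn φ (Ioi 0) ∧
  (∀ᵐ x ∂(volume.restrict (Ioi (0:ℝ))), 0 ≤ φ x) ∧
  IntegrableOn (fun x => x * φ x) (Ioi 0) ∧
  (∀ᵐ x ∂(volume.restrict (Ioi (0:ℝ))),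
    x ^ 2 * φ x = ∫ y in Ioo 0 x, ∫ z in Ioi (x - y), y * K y z * φ y * φ z)

def IsNormalised (φ : ℝ → ℝ) : Prop := ∫ x in Ioi (0:ℝ), x * φ x = 1

noncomputable def BW (W : ℝ → ℝ → ℝ) (g h : ℝ → ℝ) (x : ℝ) : ℝ :=
  (1 / x ^ 2) * ∫ y in Ioo 0 x, ∫ z in Ioi (x - y), y * W y z * g y * h z

lemma weight_pos9 (a b x : ℝ) (hx : 0 < x) : 0 < weight a b x := by
  unfold weight; split_ifs <;> positivity

lemma weight_meas9 (a b : ℝ) : Measurable (weight a b) := by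
  unfold weight
  exact Measurable.ite measurableSet_Iic (by fun_prop) (by fun_prop)

noncomputable def kk9 (α β x : ℝ) : ℝ := weight (1 - α) β x / x ^ 2

lemma kk9_eq (α β x : ℝ) (hx : 0 < x) :
    kk9 α β x = if x ≤ 1 then x ^ (-1 - α) else x ^ (β - 2) := by
  unfold kk9 weight
  split_ifs
  · rw [show (-1 - α) = (1 - α) - 2 by ring, rpow_sub hx (1 - α) 2, rpow_two]
  · rw [rpow_sub hx β 2, rpow_two]

lemma kk9_nonneg (α β x : ℝ) (hx : 0 < x) : 0 ≤ kk9 α β x := by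
  unfold kk9
  have := weight_pos9 (1 - α) β x hx
  positivity

lemma kk9_meas (α β : ℝ) : Measurable (kk9 α β) := by
  unfold kk9
  exact (weight_meas9 _ _).div (by fun_prop)

lemma kk9_anti (α β x y : ℝ) (hα : 0 < α) (hβ : β < 2) (hy : 0 < y) (hxy : y ≤ x) :
    kk9 α β x ≤ kk9 α β y := by
  have hx : 0 < x := hy.trans_le hxy
  rw [kk9_eq α β x hx, kk9_eq α β y hy]
  split_ifs with h1 h2 h2
  · exact rpow_le_rpow_of_nonpos hy hxy (by linarith)
  · linarith
  · exact (rpow_le_one_of_one_le_of_nonpos (by linarith) (by linarith)).trans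
      (one_le_rpow_of_pos_of_le_one_of_nonpos hy h2 (by linarith))
  · exact rpow_le_rpow_of_nonpos hy hxy (by linarith)

lemma kk9_le (α β x : ℝ) (hβ : β < 2) (hx : 0 < x) :
    kk9 α β x ≤ x ^ (-1 - α) + 1 := by
  rw [kk9_eq α β x hx]
  split_ifs with h1
  · linarith
  · have : x ^ (β - 2) ≤ 1 :=
      rpow_le_one_of_one_le_of_nonpos (by linarith) (by linarith)
    have : 0 ≤ x ^ (-1 - α) := by positivity
    linarith

lemma kk9_int (α β y z : ℝ) (hα : 0 < α) (hβ : β < 2) (hy : 0 < y) :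
    IntegrableOn (kk9 α β) (Ioo y (y + z)) := by
  refine Integrable.mono' (g := fun _ => kk9 α β y) ?_ (kk9_meas α β).aestronglyMeasurable ?_
  · exact integrableOn_const (by simp)
  · filter_upwards [ae_restrict_mem measurableSet_Ioo] with x hx
    rw [norm_of_nonneg (kk9_nonneg _ _ _ (hy.trans hx.1))]
    exact kk9_anti _ _ _ _ hα hβ hy hx.1.le

noncomputable def MM9 (α β y z : ℝ) : ℝ := ∫ x in Ioo y (y + z), kk9 α β x

lemma MM9_nonneg (α β y z : ℝ) (hy : 0 < y) : 0 ≤ MM9 α β y z :=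
  setIntegral_nonneg measurableSet_Ioo fun x hx => kk9_nonneg _ _ _ (hy.trans hx.1)

lemma MM9_le1 (α β y z : ℝ) (hα : 0 < α) (hβ : β < 2) (hy : 0 < y) (hz : 0 < z) :
    MM9 α β y z ≤ z * kk9 α β y := by
  have := setIntegral_mono_on (kk9_int α β y z hα hβ hy)
    (integrableOn_const (C := kk9 α β y) (by simp)) measurableSet_Ioo
    (fun x hx => kk9_anti α β x y hα hβ hy hx.1.le)
  refine this.trans (le_of_eq ?_)
  simp [hz.le]

lemma MM9_le2 (α β y z : ℝ) (hα : 0 < α) (hβ : β < 2) (hy : 0 < y) (hz : 0 < z) :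
    MM9 α β y z ≤ y ^ (-α) / α + z := by
  have hi : IntegrableOn (fun x : ℝ => x ^ (-1 - α)) (Ioi y) :=
    integrableOn_Ioi_rpow_of_lt (by linarith) hy
  have hc : IntegrableOn (fun _ : ℝ => (1:ℝ)) (Ioo y (y + z)) := integrableOn_const (by simp)
  have hi' := hi.mono_set (Ioo_subset_Ioi_self : Ioo y (y + z) ⊆ Ioi y)
  have h1 : MM9 α β y z ≤ ∫ x in Ioo y (y + z), (x ^ (-1 - α) + 1) :=
    setIntegral_mono_on (kk9_int α β y z hα hβ hy) (hi'.add hc) measurableSet_Ioo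
      (fun x hx => kk9_le α β x hβ (hy.trans hx.1))
  rw [integral_add hi' hc] at h1
  have h2 : ∫ x in Ioo y (y + z), (x ^ (-1 - α)) ≤ ∫ x in Ioi y, (x ^ (-1 - α)) := by
    refine setIntegral_mono_set hi ?_ Ioo_subset_Ioi_self.eventuallyLE
    filter_upwards [ae_restrict_mem measurableSet_Ioi] with x hx
    have : 0 < x := hy.trans hx
    simp only [Pi.zero_apply]; positivity
  rw [integral_Ioi_rpow_of_lt (by linarith) hy, show -1 - α + 1 = -α by ring, neg_div_neg_eq] at h2
  have h3 : ∫ x in Ioo y (y + z), (1:ℝ) = z := by simp [hz.le]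
  linarith

lemma rpow_le_weight9 (α β c z : ℝ) (h1 : -α ≤ c) (h2 : c ≤ β) (hz : 0 < z) :
    z ^ c ≤ weight (-α) β z := by
  unfold weight
  split_ifs with h
  · exact rpow_le_rpow_of_exponent_ge hz h h1
  · exact rpow_le_rpow_of_exponent_le (by linarith) h2

lemma final9 (α β y z w : ℝ) (hα : α ∈ Ioo (0:ℝ) 1) (hβ : β ∈ Ioo (1 + α) 2)
    (hy : 0 < y) (hz : 0 < z) (hw : w ≤ (y / z) ^ α + (z / y) ^ α) :
    y * w * MM9 α β y z ≤ (2 + 1 / α) * (weight (-α) β y * weight (-α) β z) := by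
  obtain ⟨hα0, hα1⟩ := hα
  obtain ⟨hβ1, hβ2⟩ := hβ
  have hM0 := MM9_nonneg α β y z hy
  have hM1 := MM9_le1 α β y z hα0 hβ2 hy hz
  have hM2 := MM9_le2 α β y z hα0 hβ2 hy hz
  have hd1 : (y / z) ^ α = y ^ α * z ^ (-α) := by
    rw [div_rpow hy.le hz.le, rpow_neg hz.le]; rfl
  have hd2 : (z / y) ^ α = z ^ α * y ^ (-α) := by
    rw [div_rpow hz.le hy.le, rpow_neg hy.le]; rfl
  rw [hd1, hd2] at hw
  have hwy := weight_pos9 (-α) β y hy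
  have hwz := weight_pos9 (-α) β z hz
  have e0 : y * w * MM9 α β y z ≤
      y * (y ^ α * z ^ (-α)) * MM9 α β y z + y * (z ^ α * y ^ (-α)) * MM9 α β y z := by
    have := mul_le_mul_of_nonneg_right (mul_le_mul_of_nonneg_left hw hy.le) hM0
    linarith
  have P : ∀ a b : ℝ, -α ≤ a → a ≤ β → -α ≤ b → b ≤ β →
      y ^ a * z ^ b ≤ weight (-α) β y * weight (-α) β z := fun a b h1 h2 h3 h4 =>
    mul_le_mul (rpow_le_weight9 _ _ _ _ h1 h2 hy) (rpow_le_weight9 _ _ _ _ h3 h4 hz)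
      (by positivity) hwy.le
  have yy : ∀ a b : ℝ, y ^ a * y ^ b = y ^ (a + b) := fun a b => (rpow_add hy a b).symm
  have zz : ∀ a b : ℝ, z ^ a * z ^ b = z ^ (a + b) := fun a b => (rpow_add hz a b).symm
  have y1 : y = y ^ (1:ℝ) := (rpow_one y).symm
  have z1 : z = z ^ (1:ℝ) := (rpow_one z).symm
  set Q := weight (-α) β y * weight (-α) β z with hQ
  have hQ0 : 0 < Q := mul_pos hwy hwz
  have hia : 0 < 1 / α := by positivity
  have t1 : y * (y ^ α * z ^ (-α)) * MM9 α β y z ≤ 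
      y * (y ^ α * z ^ (-α)) * (z * kk9 α β y) := by gcongr
  rw [kk9_eq _ _ _ hy] at t1
  split_ifs at t1 with h1
  · have t2 : y * (z ^ α * y ^ (-α)) * MM9 α β y z ≤
      y * (z ^ α * y ^ (-α)) * (y ^ (-α) / α + z) := by gcongr
    have q1 : y * (y ^ α * z ^ (-α)) * (z * y ^ (-1 - α)) = y ^ (0:ℝ) * z ^ (1 - α) := by
      rw [show (0:ℝ) = 1 + α + (-1 - α) by ring, show 1 - α = 1 + -α by ring, ← yy, ← yy, ← zz,
        rpow_one, rpow_one]
      ring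
    have q2 : y * (z ^ α * y ^ (-α)) * (y ^ (-α) / α + z) =
        (1 / α) * (y ^ (1 - 2 * α) * z ^ α) + y ^ (1 - α) * z ^ (1 + α) := by
      rw [show 1 - 2 * α = 1 + -α + -α by ring, show 1 - α = 1 + -α by ring, ← yy, ← yy, ← zz,
        rpow_one, rpow_one]
      ring
    have p1 := P 0 (1 - α) (by linarith) (by linarith) (by linarith) (by linarith)
    have p2 := P (1 - 2 * α) α (by linarith) (by linarith) (by linarith) (by linarith)
    have p3 := P (1 - α) (1 + α) (by linarith) (by linarith) (by linarith) (by linarith)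
    have p4 := mul_le_mul_of_nonneg_left p2 hia.le
    linarith
  · have t2 : y * (z ^ α * y ^ (-α)) * MM9 α β y z ≤
      y * (z ^ α * y ^ (-α)) * (z * kk9 α β y) := by gcongr
    rw [kk9_eq _ _ _ hy, if_neg h1] at t2
    have q1 : y * (y ^ α * z ^ (-α)) * (z * y ^ (β - 2)) = y ^ (1 + α + (β - 2)) * z ^ (1 - α) := by
      rw [show 1 - α = 1 + -α by ring, ← yy, ← yy, ← zz, rpow_one, rpow_one]
      ring
    have q2 : y * (z ^ α * y ^ (-α)) * (z * y ^ (β - 2)) =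
        y ^ (1 + -α + (β - 2)) * z ^ (1 + α) := by
      rw [← yy, ← yy, ← zz, rpow_one, rpow_one]
      ring
    have p1 := P (1 + α + (β - 2)) (1 - α) (by linarith) (by linarith) (by linarith) (by linarith)
    have p2 := P (1 + -α + (β - 2)) (1 + α) (by linarith) (by linarith) (by linarith) (by linarith)
    have p4 := mul_pos hia hQ0
    linarith

noncomputable def FF9 (α β : ℝ) (W : ℝ → ℝ → ℝ) (g h : ℝ → ℝ) (p : ℝ × ℝ) (x : ℝ) : ℝ :=
  (p.1 * W p.1 p.2 * g p.1 * h p.2) * (Ioo p.1 (p.1 + p.2)).indicator (kk9 α β) x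

lemma memX_meas9 {a b : ℝ} {g : ℝ → ℝ} (hg : MemX a b g) :
    AEStronglyMeasurable g (volume.restrict (Ioi 0)) := by
  have h1 := hg.aestronglyMeasurable.mul
    (weight_meas9 a b).inv.aestronglyMeasurable
  refine h1.congr ?_
  filter_upwards [ae_restrict_mem measurableSet_Ioi] with x hx
  have := (weight_pos9 a b x hx).ne'
  simp only [Pi.mul_apply, Pi.inv_apply]
  field_simp

lemma FF9_meas (α β : ℝ) (W : ℝ → ℝ → ℝ) (g h : ℝ → ℝ)
    (hWmeas : Measurable (Function.uncurry W))
    (hg : AEStronglyMeasurable g (volume.restrict (Ioi 0)))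
    (hh : AEStronglyMeasurable h (volume.restrict (Ioi 0))) :
    AEStronglyMeasurable (Function.uncurry (FF9 α β W g h))
      (((volume.restrict (Ioi (0:ℝ))).prod (volume.restrict (Ioi (0:ℝ)))).prod
        (volume.restrict (Ioi (0:ℝ)))) := by
  have m1 : Measurable (fun q : (ℝ × ℝ) × ℝ => q.1.1 * W q.1.1 q.1.2) :=
    (by fun_prop : Measurable fun q : (ℝ × ℝ) × ℝ => q.1.1).mul (hWmeas.comp measurable_fst)
  have m2 : Measurable (fun q : (ℝ × ℝ) × ℝ =>
      (Ioo q.1.1 (q.1.1 + q.1.2)).indicator (kk9 α β) q.2) := by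
    have hs : MeasurableSet {q : (ℝ × ℝ) × ℝ | q.1.1 < q.2 ∧ q.2 < q.1.1 + q.1.2} := by
      rw [setOf_and]
      exact (measurableSet_lt (by fun_prop) (by fun_prop)).inter
        (measurableSet_lt (by fun_prop) (by fun_prop))
    exact ((kk9_meas α β).comp measurable_snd).indicator hs
  have g1 := (hg.comp_fst (ν := volume.restrict (Ioi (0:ℝ)))).comp_fst
    (ν := volume.restrict (Ioi (0:ℝ)))
  have h1 := (hh.comp_snd (μ := volume.restrict (Ioi (0:ℝ)))).comp_fst
    (ν := volume.restrict (Ioi (0:ℝ)))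
  exact ((m1.aestronglyMeasurable.mul g1).mul h1).mul m2.aestronglyMeasurable

lemma ind9 (α β y z : ℝ) (hy : 0 < y) :
    ∫ x in Ioi (0:ℝ), (Ioo y (y + z)).indicator (kk9 α β) x = MM9 α β y z := by
  rw [setIntegral_indicator measurableSet_Ioo, inter_eq_self_of_subset_right]
  · rfl
  · exact fun x hx => hy.trans hx.1

lemma FF9_int1 (α β : ℝ) (W : ℝ → ℝ → ℝ) (g h : ℝ → ℝ) (p : ℝ × ℝ) (hα : 0 < α) (hβ : β < 2)
    (hp : 0 < p.1) : Integrable (FF9 α β W g h p) (volume.restrict (Ioi (0:ℝ))) := by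
  unfold FF9
  refine Integrable.const_mul ?_ _
  exact ((integrable_indicator_iff measurableSet_Ioo).2
    (kk9_int α β p.1 p.2 hα hβ hp)).restrict

lemma FF9_norm (α β : ℝ) (W : ℝ → ℝ → ℝ) (g h : ℝ → ℝ) (p : ℝ × ℝ) 
    (hp : 0 < p.1) : ∫ x in Ioi (0:ℝ), ‖FF9 α β W g h p x‖ =
      |p.1 * W p.1 p.2 * g p.1 * h p.2| * MM9 α β p.1 p.2 := by
  rw [← ind9 _ _ _ _ hp, ← integral_const_mul]
  refine setIntegral_congr_fun measurableSet_Ioi fun x hx => ?_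
  simp only [FF9, norm_mul, norm_eq_abs, abs_mul]
  congr 1
  rw [abs_of_nonneg]
  exact indicator_nonneg (fun x hx => kk9_nonneg _ _ _ (hp.trans hx.1)) x

lemma FF9_slice (α β : ℝ) (W : ℝ → ℝ → ℝ) (g h : ℝ → ℝ) (x : ℝ) (hx : 0 < x) :
    ∫ y in Ioi (0:ℝ), ∫ z in Ioi (0:ℝ), FF9 α β W g h (y, z) x =
      BW W g h x * weight (1 - α) β x := by
  have hBW : BW W g h x * weight (1 - α) β x =
      ∫ y in Ioo 0 x, ∫ z in Ioi (x - y), y * W y z * g y * h z * kk9 α β x := by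
    simp_rw [integral_mul_const]
    unfold BW kk9
    ring
  rw [hBW, ← inter_eq_self_of_subset_right (Ioo_subset_Ioi_self : Ioo 0 x ⊆ Ioi 0),
    ← setIntegral_indicator measurableSet_Ioo]
  refine setIntegral_congr_fun measurableSet_Ioi fun y hy => ?_
  have hy : 0 < y := hy
  by_cases hyx : y < x
  · rw [indicator_of_mem (show y ∈ Ioo 0 x from ⟨hy, hyx⟩),
      ← inter_eq_self_of_subset_right (Ioi_subset_Ioi (by linarith) : Ioi (x - y) ⊆ Ioi 0),
      ← setIntegral_indicator measurableSet_Ioi]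
    refine setIntegral_congr_fun measurableSet_Ioi fun z hz => ?_
    simp only [FF9, indicator, mem_Ioo, mem_Ioi, hyx, true_and, sub_lt_iff_lt_add']
    split_ifs <;> simp
  · rw [indicator_of_notMem (fun h => hyx h.2)]
    simp [FF9, indicator, hyx]

theorem stmt9 (α β : ℝ) (hα : α ∈ Ioo (0:ℝ) 1) (hβ : β ∈ Ioo (1 + α) 2)
    (W : ℝ → ℝ → ℝ) (hWmeas : Measurable (Function.uncurry W))
    (hWb : ∀ x y : ℝ, 0 < x → 0 < y → 0 ≤ W x y ∧ W x y ≤ (x / y) ^ α + (y / x) ^ α) :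
    ∃ C > (0:ℝ), ∀ g h : ℝ → ℝ, MemX (-α) β g → MemX (-α) β h →
      MemX (1 - α) β (BW W g h) ∧
      Xnorm (1 - α) β (BW W g h) ≤ C * Xnorm (-α) β g * Xnorm (-α) β h := by
  obtain ⟨hα0, hα1⟩ := id hα
  obtain ⟨hβ1, hβ2⟩ := id hβ
  refine ⟨2 + 1 / α, by positivity, fun g h hg hh => ?_⟩
  set μ : Measure ℝ := volume.restrict (Ioi (0:ℝ)) with hμ
  have hpos : ∀ᵐ p ∂(μ.prod μ), 0 < p.1 ∧ 0 < p.2 := by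
    rw [hμ, Measure.prod_restrict]
    filter_upwards [ae_restrict_mem (measurableSet_Ioi.prod measurableSet_Ioi)] with p hp
    exact hp
  have hgn : Integrable (fun y => |g y| * weight (-α) β y) μ := by
    refine hg.norm.congr ?_
    filter_upwards [ae_restrict_mem measurableSet_Ioi] with x hx
    rw [norm_mul, norm_of_nonneg (weight_pos9 _ _ _ hx).le, norm_eq_abs]
  have hhn : Integrable (fun y => |h y| * weight (-α) β y) μ := by
    refine hh.norm.congr ?_
    filter_upwards [ae_restrict_mem measurableSet_Ioi] with x hx
    rw [norm_mul, norm_of_nonneg (weight_pos9 _ _ _ hx).le, norm_eq_abs]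
  have hdom : Integrable (fun p : ℝ × ℝ => (2 + 1 / α) *
      ((|g p.1| * weight (-α) β p.1) * (|h p.2| * weight (-α) β p.2))) (μ.prod μ) :=
    (hgn.mul_prod hhn).const_mul _
  have hbd : ∀ᵐ p ∂(μ.prod μ), ∫ x, ‖FF9 α β W g h p x‖ ∂μ ≤ (2 + 1 / α) *
      ((|g p.1| * weight (-α) β p.1) * (|h p.2| * weight (-α) β p.2)) := by
    filter_upwards [hpos] with p hp
    rw [hμ, FF9_norm _ _ _ _ _ _ hp.1]
    have hW := hWb _ _ hp.1 hp.2
    have := final9 α β p.1 p.2 (W p.1 p.2) hα hβ hp.1 hp.2 hW.2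
    have h2 := mul_le_mul_of_nonneg_left this
      (mul_nonneg (abs_nonneg (g p.1)) (abs_nonneg (h p.2)))
    rw [abs_mul, abs_mul, abs_of_nonneg (mul_nonneg hp.1.le hW.1)]
    linarith
  have hmeas := FF9_meas α β W g h hWmeas (memX_meas9 hg) (memX_meas9 hh)
  have hInt : Integrable (Function.uncurry (FF9 α β W g h)) ((μ.prod μ).prod μ) := by
    refine (integrable_prod_iff hmeas).2 ⟨?_, ?_⟩
    · filter_upwards [hpos] with p hp
      exact FF9_int1 α β W g h p hα0 hβ2 hp.1
    · refine hdom.mono' hmeas.norm.integral_prod_right' ?_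
      filter_upwards [hbd] with p hp
      rw [norm_of_nonneg (integral_nonneg fun _ => norm_nonneg _)]
      exact hp
  have hslice : ∀ᵐ x ∂μ, ∫ p, FF9 α β W g h p x ∂(μ.prod μ) =
      BW W g h x * weight (1 - α) β x := by
    filter_upwards [hInt.prod_left_ae, ae_restrict_mem measurableSet_Ioi] with x hx hx0
    rw [← FF9_slice α β W g h x hx0]
    exact integral_prod _ hx
  have hB : Integrable (fun x => BW W g h x * weight (1 - α) β x) μ :=
    hInt.integral_prod_right.congr hslice
  refine ⟨hB, ?_⟩
  calc Xnorm (1 - α) β (BW W g h) = ∫ x, ‖∫ p, FF9 α β W g h p x ∂(μ.prod μ)‖ ∂μ := by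
        refine integral_congr_ae ?_
        filter_upwards [hslice, ae_restrict_mem measurableSet_Ioi] with x hx hx0
        rw [hx, norm_mul, norm_of_nonneg (weight_pos9 _ _ _ hx0).le, norm_eq_abs]
    _ ≤ ∫ x, ∫ p, ‖FF9 α β W g h p x‖ ∂(μ.prod μ) ∂μ :=
        integral_mono hInt.integral_prod_right.norm hInt.norm.integral_prod_right
          fun x => norm_integral_le_integral_norm _
    _ = ∫ p, ∫ x, ‖FF9 α β W g h p x‖ ∂μ ∂(μ.prod μ) :=
        (integral_integral_swap (f := fun p x => ‖FF9 α β W g h p x‖) hInt.norm).symm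
    _ ≤ ∫ p : ℝ × ℝ, (2 + 1 / α) *
      ((|g p.1| * weight (-α) β p.1) * (|h p.2| * weight (-α) β p.2)) ∂(μ.prod μ) :=
        integral_mono_ae hInt.norm.integral_prod_left hdom hbd
    _ = (2 + 1 / α) * Xnorm (-α) β g * Xnorm (-α) β h := by
        rw [integral_const_mul, integral_prod_mul (fun y => |g y| * weight (-α) β y)
          (fun y => |h y| * weight (-α) β y), mul_assoc]
        rfl
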